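/- arXiv:1510.00162 — 2 statements merged into one kernel-verified Lean document; each statement's English description precedes it below -/
import Mathlib

section
/- Let Z ⊆ Σ₂ be a nonempty compact shift-invariant set, f : Σ₂ × Σ₂ → ℝ continuous, and μ an ergodic shift-invariant measure. Then for μ-a.e. x, lim_{n→∞} inf_{y∈Z} (1/n) Σ_{i=0}^{n-1} f(σ^i x, σ^i y) exists and equals the infimum of ∫ f dm over all (σ×σ)-invariant measures m on Σ₂×Σ₂ whose first marginal is μ and whose second marginal gives Z full measure. -/
open MeasureTheory Filter

noncomputable section

/-- The full two-sided shift space on two symbols. -/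
abbrev Sig := ℤ → Bool

/-- The two-sided shift map. -/
def shift : Sig → Sig := fun x i => x (i + 1)

/-- `birk φ n x = sup_{k ∈ ℤ} Σ_{i=0}^{n-1} φ(x_i, i+k)`, which equals
`log ‖L^φ_{x_{n-1}} ⋯ L^φ_{x_0}‖` for the associated weighted shift operators. -/
def birk (φ : Bool → ℤ → ℝ) (n : ℕ) (x : Sig) : ℝ :=
  ⨆ k : ℤ, ∑ i ∈ Finset.range n, φ (x (i : ℤ)) ((i : ℤ) + k)

/-- The top Lyapunov exponent `Λ(φ,μ) = inf_{n ≥ 1} (1/n) ∫ birk φ n dμ`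
(the limit exists and equals this infimum by subadditivity). -/
def Lam (φ : Bool → ℤ → ℝ) (μ : Measure Sig) : ℝ :=
  ⨅ n : ℕ, ((n : ℝ) + 1)⁻¹ * ∫ x, birk φ (n + 1) x ∂μ

/-- `log ϱ(L₀^φ, L₁^φ) = inf_{n ≥ 1} (1/n) sup_{x} birk φ n x`. -/
def logSpr (φ : Bool → ℤ → ℝ) : ℝ :=
  ⨅ n : ℕ, ((n : ℝ) + 1)⁻¹ * ⨆ x : Sig, birk φ (n + 1) x

def maxSum {α : Type*} (T : α → α) (g : α → ℝ) : ℕ → α → ℝ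
  | 0 => fun _ => 0
  | N + 1 => fun x => max 0 (g x + maxSum T g N (T x))

lemma maxSum_nonneg {α : Type*} (T : α → α) (g : α → ℝ) (N : ℕ) (x : α) :
    0 ≤ maxSum T g N x := by
  cases N with
  | zero => simp [maxSum]
  | succ N => simp [maxSum]

lemma maxSum_le_succ {α : Type*} (T : α → α) (g : α → ℝ) (N : ℕ) :
    ∀ x : α, maxSum T g N x ≤ maxSum T g (N + 1) x := by
  induction N with
  | zero => intro x; exact maxSum_nonneg T g 1 x
  | succ N ih =>
    intro x
    have := ih (T x)
    simp only [maxSum] at this ⊢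
    exact max_le_max le_rfl (by linarith)

lemma sum_le_maxSum {α : Type*} (T : α → α) (g : α → ℝ) (N : ℕ) :
    ∀ x : α, ∑ i ∈ Finset.range N, g (T^[i] x) ≤ maxSum T g N x := by
  induction N with
  | zero => intro x; simp [maxSum]
  | succ N ih =>
    intro x
    have := ih (T x)
    rw [Finset.sum_range_succ']
    simp only [maxSum]
    refine le_max_of_le_right ?_
    simp only [Function.iterate_succ_apply, Function.iterate_zero, id]
    linarith

lemma maxSum_sub_le {α : Type*} (T : α → α) (g : α → ℝ) (N : ℕ) (x : α) :
    maxSum T g N x - maxSum T g N (T x) ≤ {x | 0 < maxSum T g N x}.indicator g x := by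
  by_cases h : 0 < maxSum T g N x
  · rw [Set.indicator_of_mem (by exact h)]
    cases N with
    | zero => simp [maxSum] at h
    | succ N =>
      have h1 := maxSum_le_succ T g N (T x)
      have h2 : maxSum T g (N + 1) x = g x + maxSum T g N (T x) := by
        simp only [maxSum] at h ⊢
        rcases max_choice 0 (g x + maxSum T g N (T x)) with h' | h'
        · rw [h'] at h; exact absurd h (lt_irrefl _)
        · exact h'
      linarith
  · rw [Set.indicator_of_notMem (by exact h)]
    have := maxSum_nonneg T g N (T x)
    linarith

lemma integral_nonneg_of_max {α : Type*} [MeasurableSpace α] {m : Measure α} [IsFiniteMeasure m]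
    {T : α → α} (hT : MeasurePreserving T m m) (g : α → ℝ) (hg : Measurable g) (C : ℝ)
    (hC : ∀ x, |g x| ≤ C)
    (h : ∀ᵐ x ∂m, ∃ n : ℕ, 0 < ∑ i ∈ Finset.range n, g (T^[i] x)) : 0 ≤ ∫ x, g x ∂m := by
  have gint : Integrable g m := Integrable.of_bound hg.aestronglyMeasurable C (ae_of_all _ hC)
  have hmeas : ∀ N, Measurable (maxSum T g N) := by
    intro N
    induction N with
    | zero => exact measurable_const
    | succ N ih => exact measurable_const.max (hg.add (ih.comp hT.measurable))
  have hintg : ∀ N, Integrable (maxSum T g N) m := by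
    intro N
    induction N with
    | zero => exact integrable_const 0
    | succ N ih =>
      exact (integrable_const (0:ℝ)).sup (gint.add (hT.integrable_comp_of_integrable ih))
  have hset : ∀ N, MeasurableSet {x | 0 < maxSum T g N x} := fun N =>
    measurableSet_lt measurable_const (hmeas N)
  have hN : ∀ N, 0 ≤ ∫ x, {x | 0 < maxSum T g N x}.indicator g x ∂m := by
    intro N
    have h1 : ∫ x, (maxSum T g N x - maxSum T g N (T x)) ∂m = 0 := by
      have h2 : ∫ x, maxSum T g N (T x) ∂m = ∫ x, maxSum T g N x ∂m := by
        conv_rhs => rw [← hT.map_eq]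
        rw [integral_map hT.measurable.aemeasurable (hmeas N).aestronglyMeasurable]
      have h3 : Integrable (fun x => maxSum T g N (T x)) m :=
        hT.integrable_comp_of_integrable (hintg N)
      rw [integral_sub (hintg N) h3, h2, sub_self]
    refine h1.symm.le.trans ?_
    exact integral_mono ((hintg N).sub (hT.integrable_comp_of_integrable (hintg N)))
      (gint.indicator (hset N)) (maxSum_sub_le T g N)
  have hlim : Tendsto (fun N => ∫ x, {x | 0 < maxSum T g N x}.indicator g x ∂m) atTop
      (nhds (∫ x, g x ∂m)) := by
    refine tendsto_integral_of_dominated_convergence (fun _ => C)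
      (fun N => (hg.indicator (hset N)).aestronglyMeasurable) (integrable_const C) ?_ ?_
    · intro N
      refine ae_of_all _ fun x => ?_
      exact (norm_indicator_le_norm_self _ _).trans (hC x)
    · filter_upwards [h] with x hx
      obtain ⟨n, hn⟩ := hx
      refine tendsto_const_nhds.congr' ?_
      filter_upwards [eventually_ge_atTop n] with N hNn
      have hmono : Monotone (fun N => maxSum T g N x) :=
        monotone_nat_of_le_succ fun N => maxSum_le_succ T g N x
      rw [Set.indicator_of_mem]
      exact lt_of_lt_of_le (hn.trans_le (sum_le_maxSum T g n x)) (hmono hNn)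
  exact ge_of_tendsto' hlim hN

lemma avg_bdd {C b : ℝ} {n : ℕ} (h : |b| ≤ C * ((n:ℝ)+1)) : |((n:ℝ)+1)⁻¹ * b| ≤ C := by
  have hn : (0:ℝ) < (n:ℝ)+1 := by positivity
  rw [abs_mul, abs_of_pos (inv_pos.2 hn), inv_mul_le_iff₀ hn]
  linarith

lemma bdd_above_of_abs {u : ℕ → ℝ} {C : ℝ} (h : ∀ n, |u n| ≤ C) :
    IsBoundedUnder (· ≤ ·) atTop u :=
  isBoundedUnder_of ⟨C, fun n => (abs_le.1 (h n)).2⟩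

lemma bdd_below_of_abs {u : ℕ → ℝ} {C : ℝ} (h : ∀ n, |u n| ≤ C) :
    IsBoundedUnder (· ≥ ·) atTop u :=
  isBoundedUnder_of ⟨-C, fun n => (abs_le.1 (h n)).1⟩

lemma limsup_le_of_close {u v : ℕ → ℝ} {C : ℝ} (hu : ∀ n, |u n| ≤ C) (hv : ∀ n, |v n| ≤ C)
    (h : Tendsto (fun n => u n - v n) atTop (nhds 0)) :
    limsup u atTop ≤ limsup v atTop := by
  refine le_of_forall_pos_le_add fun ε hε => ?_
  have h1 : ∀ᶠ n in atTop, v n < limsup v atTop + ε / 2 :=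
    eventually_lt_of_limsup_lt (by linarith) (bdd_above_of_abs hv)
  have h2 : ∀ᶠ n in atTop, u n - v n < ε / 2 := h.eventually_lt_const (by linarith)
  refine limsup_le_of_le (bdd_below_of_abs hu).isCoboundedUnder_le ?_
  filter_upwards [h1, h2] with n h1 h2
  linarith

lemma limsup_const_of_ergodic {α : Type*} [MeasurableSpace α] {μ : Measure α}
    {T : α → α} (hT : Ergodic T μ) (b : ℕ → α → ℝ) (hb : ∀ n, Measurable (b n)) (C D : ℝ)
    (hC : ∀ n x, |b n x| ≤ C * ((n:ℝ) + 1)) (hD : ∀ n x, |b n (T x) - b n x| ≤ D) :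
    ∃ c : ℝ, ∀ᵐ x ∂μ, limsup (fun n : ℕ => ((n:ℝ)+1)⁻¹ * b n x) atTop = c := by
  have hm : Measurable (fun x => limsup (fun n : ℕ => ((n:ℝ)+1)⁻¹ * b n x) atTop) :=
    Measurable.limsup fun n => (hb n).const_mul _
  have hB : ∀ x, ∀ n : ℕ, |((n:ℝ)+1)⁻¹ * b n x| ≤ C := fun x n => avg_bdd (hC n x)
  have hz : ∀ x, Tendsto (fun n : ℕ => ((n:ℝ)+1)⁻¹ * b n (T x) - ((n:ℝ)+1)⁻¹ * b n x) atTop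
      (nhds 0) := by
    intro x
    have h0 : Tendsto (fun n : ℕ => 1 / ((n:ℝ)+1) * D) atTop (nhds 0) := by
      simpa using (tendsto_one_div_add_atTop_nhds_zero_nat (𝕜 := ℝ)).mul_const D
    refine squeeze_zero_norm (fun n => ?_) h0
    have hn : (0:ℝ) < (n:ℝ)+1 := by positivity
    rw [← mul_sub, Real.norm_eq_abs, abs_mul, abs_of_pos (inv_pos.2 hn), one_div]
    exact mul_le_mul_of_nonneg_left (hD n x) (inv_pos.2 hn).le
  have := hT.ae_eq_const_of_ae_eq_comp₀ hm.nullMeasurable (ae_of_all _ fun x => ?_)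
  · obtain ⟨c, hc⟩ := this
    exact ⟨c, hc⟩
  · apply le_antisymm
    · exact limsup_le_of_close (hB _) (hB _) (hz x)
    · refine limsup_le_of_close (hB _) (hB _) ?_
      simpa using (hz x).neg

/-- If the limsup of averages is at least `c` a.e., then `c ≤ ∫ f`. -/
lemma le_integral_of_limsup {α : Type*} [MeasurableSpace α] {m : Measure α} [IsProbabilityMeasure m]
    {T : α → α} (hT : MeasurePreserving T m m) (g : α → ℝ) (hg : Measurable g) (C c : ℝ)
    (hC : ∀ x, |g x| ≤ C)
    (h : ∀ᵐ x ∂m, ∀ ε > 0, ∃ n : ℕ, c - ε < ((n:ℝ)+1)⁻¹ * ∑ i ∈ Finset.range (n+1), g (T^[i] x)) :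
    c ≤ ∫ x, g x ∂m := by
  refine le_of_forall_pos_le_add fun ε hε => ?_
  have gint : Integrable g m := Integrable.of_bound hg.aestronglyMeasurable C (ae_of_all _ hC)
  have := integral_nonneg_of_max hT (fun x => g x + (ε - c)) (hg.add_const _) (C + |ε - c|)
    (fun x => (abs_add_le _ _).trans (by linarith [hC x])) ?_
  · rw [integral_add gint (integrable_const _)] at this
    simp at this
    linarith
  · filter_upwards [h] with x hx
    obtain ⟨n, hn⟩ := hx ε hε
    refine ⟨n + 1, ?_⟩
    have hp : (0:ℝ) < (n:ℝ)+1 := by positivity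
    rw [lt_inv_mul_iff₀ hp] at hn
    rw [Finset.sum_add_distrib]
    simp
    nlinarith

lemma exists_lt_of_limsup_eq {u : ℕ → ℝ} {C c : ℝ} (hu : ∀ n, |u n| ≤ C)
    (h : limsup u atTop = c) : ∀ ε > 0, ∃ n, c - ε < u n := by
  intro ε hε
  have := frequently_lt_of_lt_limsup (f := atTop) (u := u) (b := c - ε)
    (bdd_below_of_abs hu).isCoboundedUnder_le (by linarith)
  exact this.exists

lemma sum_abs_le {α : Type*} {T : α → α} {g : α → ℝ} {C : ℝ} (hC : ∀ x, |g x| ≤ C) (n : ℕ)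
    (x : α) : |∑ i ∈ Finset.range (n+1), g (T^[i] x)| ≤ C * ((n:ℝ)+1) := by
  refine (Finset.abs_sum_le_sum_abs _ _).trans ?_
  refine (Finset.sum_le_sum fun i _ => hC (T^[i] x)).trans ?_
  simp
  linarith

lemma sum_shift {α : Type*} (T : α → α) (g : α → ℝ) (n : ℕ) (x : α) :
    ∑ i ∈ Finset.range n, g (T^[i] (T x)) =
      ∑ i ∈ Finset.range n, g (T^[i] x) + (g (T^[n] x) - g x) := by
  have h1 := Finset.sum_range_succ (fun i => g (T^[i] x)) n
  have h2 := Finset.sum_range_succ' (fun i => g (T^[i] x)) n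
  simp only [Function.iterate_succ_apply, Function.iterate_zero, id] at h2
  linarith

lemma birkhoff_upper {α : Type*} [MeasurableSpace α] {μ : Measure α} [IsProbabilityMeasure μ]
    {T : α → α} (hT : Ergodic T μ) (g : α → ℝ) (hg : Measurable g) (C : ℝ)
    (hC : ∀ x, |g x| ≤ C) :
    ∀ᵐ x ∂μ, ∀ a, ∫ x, g x ∂μ < a →
      ∀ᶠ n : ℕ in atTop, ((n:ℝ)+1)⁻¹ * ∑ i ∈ Finset.range (n+1), g (T^[i] x) < a := by
  obtain ⟨c, hc⟩ := limsup_const_of_ergodic hT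
    (fun n x => ∑ i ∈ Finset.range (n+1), g (T^[i] x))
    (fun n => Finset.measurable_sum _ fun i _ => hg.comp (hT.measurable.iterate i)) C (C + C)
    (fun n x => sum_abs_le hC n x)
    (fun n x => by
      rw [sum_shift, add_sub_cancel_left]
      exact (abs_sub _ _).trans (add_le_add (hC _) (hC _)))
  have hB : ∀ x, ∀ n : ℕ, |((n:ℝ)+1)⁻¹ * ∑ i ∈ Finset.range (n+1), g (T^[i] x)| ≤ C :=
    fun x n => avg_bdd (sum_abs_le hC n x)
  have hle : c ≤ ∫ x, g x ∂μ := by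
    refine le_integral_of_limsup hT.toMeasurePreserving g hg C c hC ?_
    filter_upwards [hc] with x hx
    exact exists_lt_of_limsup_eq (hB x) hx
  filter_upwards [hc] with x hx a ha
  exact eventually_lt_of_limsup_lt (by linarith) (bdd_above_of_abs (hB x))

lemma birkhoff_tendsto {α : Type*} [MeasurableSpace α] {μ : Measure α} [IsProbabilityMeasure μ]
    {T : α → α} (hT : Ergodic T μ) (g : α → ℝ) (hg : Measurable g) (C : ℝ)
    (hC : ∀ x, |g x| ≤ C) :
    ∀ᵐ x ∂μ, Tendsto
      (fun n : ℕ => ((n:ℝ)+1)⁻¹ * ∑ i ∈ Finset.range (n+1), g (T^[i] x)) atTop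
      (nhds (∫ x, g x ∂μ)) := by
  filter_upwards [birkhoff_upper hT g hg C hC,
    birkhoff_upper hT (fun x => - g x) hg.neg C (by simpa using hC)] with x h1 h2
  refine tendsto_order.2 ⟨fun a ha => ?_, h1⟩
  filter_upwards [h2 (-a) (by rw [integral_neg]; linarith)] with n hn
  rw [Finset.sum_neg_distrib, mul_neg] at hn
  linarith

lemma continuous_shift : Continuous shift :=
  continuous_pi fun i => continuous_apply (i + 1)

/-- The diagonal shift on pairs. -/
abbrev shift2 : Sig × Sig → Sig × Sig := Prod.map shift shift

lemma continuous_shift2 : Continuous shift2 := continuous_shift.prodMap continuous_shift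

lemma shift2_iter (i : ℕ) (p : Sig × Sig) : shift2^[i] p = (shift^[i] p.1, shift^[i] p.2) := by
  rw [Prod.map_iterate]; rfl

/-- Empirical measure of an orbit segment. -/
def empM (n : ℕ) (p : Sig × Sig) : Measure (Sig × Sig) :=
  ((n : ENNReal) + 1)⁻¹ • ∑ i ∈ Finset.range (n + 1), Measure.dirac (shift2^[i] p)

instance empM_prob (n : ℕ) (p : Sig × Sig) : IsProbabilityMeasure (empM n p) := by
  constructor
  simp only [empM, Measure.smul_apply, Measure.finsetSum_apply, measure_univ]
  simp
  exact ENNReal.inv_mul_cancel (by simp) (by finiteness)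

lemma empM_integral (n : ℕ) (p : Sig × Sig) (g : Sig × Sig → ℝ) :
    ∫ q, g q ∂(empM n p) = ((n:ℝ)+1)⁻¹ * ∑ i ∈ Finset.range (n+1), g (shift2^[i] p) := by
  rw [empM, integral_smul_measure, integral_finsetSum_measure]
  · simp only [integral_dirac, smul_eq_mul]
    congr 1
    rw [ENNReal.toReal_inv, ENNReal.toReal_add (by simp) (by simp)]
    simp
  · intro i _
    exact integrable_dirac (by simp)

lemma exists_bound_of_continuous {X : Type*} [TopologicalSpace X] [CompactSpace X] {g : X → ℝ}
    (hg : Continuous g) : ∃ C, ∀ x, |g x| ≤ C := by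
  obtain ⟨C, hC⟩ := isCompact_univ.exists_bound_of_continuousOn hg.continuousOn
  exact ⟨C, fun x => hC x trivial⟩

lemma shift_iter_mem {Z : Set Sig} (hZinv : shift '' Z = Z) {y : Sig} (hy : y ∈ Z) (i : ℕ) :
    shift^[i] y ∈ Z := by
  induction i with
  | zero => exact hy
  | succ i ih =>
    rw [Function.iterate_succ_apply', ← hZinv]
    exact ⟨_, ih, rfl⟩

lemma exists_joining
    (Z : Set Sig) (hZne : Z.Nonempty) (hZcpt : IsCompact Z) (hZinv : shift '' Z = Z)
    (f : Sig × Sig → ℝ) (hf : Continuous f)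
    (μ : Measure Sig) (hprob : IsProbabilityMeasure μ) (x : Sig)
    (hx : ∀ k : ℕ, Tendsto (fun n : ℕ => ((n:ℝ)+1)⁻¹ * ∑ i ∈ Finset.range (n+1),
        TopologicalSpace.denseSeq C(Sig, ℝ) k (shift^[i] x)) atTop
        (nhds (∫ z, TopologicalSpace.denseSeq C(Sig, ℝ) k z ∂μ)))
    (U : Ultrafilter ℕ) (hU : (U : Filter ℕ) ≤ atTop) :
    ∃ m : Measure (Sig × Sig), (IsProbabilityMeasure m ∧ m.map (Prod.map shift shift) = m ∧
        m.map Prod.fst = μ ∧ (m.map Prod.snd) Z = 1) ∧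
      Tendsto (fun n : ℕ => ((n : ℝ) + 1)⁻¹ *
        ⨅ y : Z, ∑ i ∈ Finset.range (n + 1), f (shift^[i] x, shift^[i] (y : Sig))) U
        (nhds (∫ p, f p ∂m)) := by
  have hcont : ∀ n : ℕ, Continuous fun y : Sig =>
      ∑ i ∈ Finset.range (n + 1), f (shift^[i] x, shift^[i] y) := fun n =>
    continuous_finsetSum _ fun i _ =>
      hf.comp (continuous_const.prodMk (continuous_shift.iterate i))
  have hmin : ∀ n : ℕ, ∃ y ∈ Z,
      (⨅ y : Z, ∑ i ∈ Finset.range (n + 1), f (shift^[i] x, shift^[i] (y : Sig))) =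
        ∑ i ∈ Finset.range (n + 1), f (shift^[i] x, shift^[i] y) := by
    intro n
    obtain ⟨y, hy, hmin⟩ := hZcpt.exists_isMinOn hZne (hcont n).continuousOn
    refine ⟨y, hy, ?_⟩
    have : Nonempty Z := ⟨⟨y, hy⟩⟩
    refine le_antisymm (ciInf_le ⟨∑ i ∈ Finset.range (n + 1), f (shift^[i] x, shift^[i] y), ?_⟩
      (⟨y, hy⟩ : Z)) (le_ciInf fun z => hmin z.2)
    rintro _ ⟨z, rfl⟩
    exact hmin z.2
  choose y hyZ hy using hmin
  let P : ℕ → ProbabilityMeasure (Sig × Sig) := fun n => ⟨empM n (x, y n), inferInstance⟩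
  obtain ⟨m, -, hm⟩ := isCompact_univ.ultrafilter_le_nhds (U.map P) (by simp)
  have hm' : Tendsto P U (nhds m) := hm
  have hintg := ProbabilityMeasure.tendsto_iff_forall_integral_tendsto.1 hm'
  have hintc : ∀ g : Sig × Sig → ℝ, Continuous g → Tendsto (fun n : ℕ =>
      ((n:ℝ)+1)⁻¹ * ∑ i ∈ Finset.range (n+1), g (shift2^[i] (x, y n))) U
      (nhds (∫ p, g p ∂(m : Measure (Sig × Sig)))) := by
    intro g hg
    have := hintg (BoundedContinuousFunction.mkOfCompact ⟨g, hg⟩)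
    refine this.congr fun n => ?_
    exact empM_integral n (x, y n) g
  refine ⟨m, ⟨inferInstance, ?_, ?_, ?_⟩, ?_⟩
  · have : IsProbabilityMeasure ((m : Measure (Sig × Sig)).map shift2) :=
      Measure.isProbabilityMeasure_map continuous_shift2.measurable.aemeasurable
    refine ext_of_forall_integral_eq_of_IsFiniteMeasure fun g => ?_
    rw [integral_map continuous_shift2.measurable.aemeasurable
      g.continuous.measurable.aestronglyMeasurable]
    have h1 := hintc g g.continuous
    have h2 := hintc (fun p => g (shift2 p)) (g.continuous.comp continuous_shift2)
    refine tendsto_nhds_unique h2 ?_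
    obtain ⟨C, hC⟩ := exists_bound_of_continuous g.continuous
    have h0 : Tendsto (fun n : ℕ => 1 / ((n:ℝ)+1) * (C + C)) atTop (nhds 0) := by
      simpa using (tendsto_one_div_add_atTop_nhds_zero_nat (𝕜 := ℝ)).mul_const (C + C)
    have h3 : Tendsto (fun n : ℕ => ((n:ℝ)+1)⁻¹ *
        (g (shift2^[n+1] (x, y n)) - g (x, y n))) atTop (nhds 0) := by
      refine squeeze_zero_norm (fun n => ?_) h0
      have hn : (0:ℝ) < (n:ℝ)+1 := by positivity
      rw [Real.norm_eq_abs, abs_mul, abs_of_pos (inv_pos.2 hn), one_div]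
      exact mul_le_mul_of_nonneg_left ((abs_sub _ _).trans (add_le_add (hC _) (hC _)))
        (inv_pos.2 hn).le
    have h4 := h1.add (h3.mono_left hU)
    rw [add_zero] at h4
    refine h4.congr fun n => ?_
    rw [← mul_add, ← sum_shift shift2 g]
    simp only [← Function.iterate_succ_apply, ← Function.iterate_succ_apply']
  · have : IsProbabilityMeasure ((m : Measure (Sig × Sig)).map Prod.fst) :=
      Measure.isProbabilityMeasure_map measurable_fst.aemeasurable
    have hcl : ∀ ν : Measure Sig, IsProbabilityMeasure ν →
        Continuous (fun g : C(Sig, ℝ) => ∫ z, g z ∂ν) := by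
      intro ν hν
      refine Metric.continuous_iff.2 fun g ε hε => ⟨ε / 2, by positivity, fun h hh => ?_⟩
      have hi : ∀ g : C(Sig, ℝ), Integrable (fun z => g z) ν := fun g => by
        obtain ⟨C, hC⟩ := exists_bound_of_continuous g.continuous
        exact Integrable.of_bound g.continuous.measurable.aestronglyMeasurable C (ae_of_all _ hC)
      rw [Real.dist_eq, ← integral_sub (hi h) (hi g)]
      have := norm_integral_le_of_norm_le_const (μ := ν) (f := fun z => h z - g z) (C := ε / 2)
        (ae_of_all _ fun z => by
          rw [← dist_eq_norm]
          exact (ContinuousMap.dist_apply_le_dist z).trans hh.le)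
      rw [Real.norm_eq_abs] at this
      simp at this
      linarith
    have hall : (fun g : C(Sig, ℝ) => ∫ z, g z ∂((m : Measure (Sig × Sig)).map Prod.fst)) =
        fun g : C(Sig, ℝ) => ∫ z, g z ∂μ := by
      refine Continuous.ext_on (TopologicalSpace.denseRange_denseSeq C(Sig, ℝ)) (hcl _ inferInstance)
        (hcl _ hprob) ?_
      rintro _ ⟨k, rfl⟩
      set g := TopologicalSpace.denseSeq C(Sig, ℝ) k with hg
      simp only
      rw [integral_map measurable_fst.aemeasurable
        g.continuous.measurable.aestronglyMeasurable]
      refine tendsto_nhds_unique (hintc (fun p => g p.1) (g.continuous.comp continuous_fst)) ?_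
      refine ((hx k).mono_left hU).congr fun n => ?_
      simp only [shift2_iter]
      rfl
    refine ext_of_forall_integral_eq_of_IsFiniteMeasure fun g => ?_
    exact congrFun hall g.toContinuousMap
  · rw [Measure.map_apply measurable_snd hZcpt.isClosed.measurableSet]
    refine le_antisymm prob_le_one ?_
    have h1 := ProbabilityMeasure.limsup_measure_closed_le_of_tendsto hm'
      (hZcpt.isClosed.preimage (continuous_snd : Continuous (Prod.snd : Sig × Sig → Sig)))
    refine le_trans ?_ h1
    have h2 : ∀ n, ((P n : ProbabilityMeasure (Sig × Sig)) : Measure (Sig × Sig))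
        (Prod.snd ⁻¹' Z) = 1 := by
      intro n
      change empM n (x, y n) (Prod.snd ⁻¹' Z) = 1
      have h3 : ∀ i, Measure.dirac (shift2^[i] (x, y n)) (Prod.snd ⁻¹' Z) = 1 := fun i => by
        rw [Measure.dirac_apply' _ (hZcpt.isClosed.measurableSet.preimage measurable_snd),
          Set.indicator_of_mem]
        · rfl
        · rw [shift2_iter]
          exact shift_iter_mem hZinv (hyZ n) i
      simp only [empM, Measure.smul_apply, Measure.finsetSum_apply, h3]
      simp
      exact ENNReal.inv_mul_cancel (by simp) (by finiteness)
    simp only [h2]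
    simp
  · refine (hintc f hf).congr fun n => ?_
    rw [hy n]
    simp only [shift2_iter]

lemma infSum_bddBelow {Z : Set Sig} {f : Sig × Sig → ℝ} {C : ℝ} (hC : ∀ p, |f p| ≤ C)
    (n : ℕ) (x : Sig) :
    BddBelow (Set.range fun y : Z => ∑ i ∈ Finset.range (n + 1), f (shift^[i] x, shift^[i] (y : Sig))) := by
  refine ⟨-(C * ((n:ℝ)+1)), ?_⟩
  rintro _ ⟨y, rfl⟩
  have := sum_abs_le (T := shift2) hC n (x, (y : Sig))
  simp only [shift2_iter] at this
  exact (abs_le.1 this).1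

/-- Let `Z ⊆ Σ₂` be a nonempty compact shift-invariant set, `f : Σ₂ × Σ₂ → ℝ` continuous,
and `μ` an ergodic shift-invariant Borel probability measure.  Then for `μ`-a.e. `x`,
`(1/n) inf_{y ∈ Z} Σ_{i<n} f(σ^i x, σ^i y)` converges to the infimum of `∫ f dm` over all
`(σ×σ)`-invariant Borel probability measures `m` on `Σ₂ × Σ₂` whose first marginal is `μ`
and whose second marginal gives `Z` full measure. -/
theorem inf_orbit_average_tendsto_inf_joinings
    (Z : Set Sig) (hZne : Z.Nonempty) (hZcpt : IsCompact Z) (hZinv : shift '' Z = Z)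
    (f : Sig × Sig → ℝ) (hf : Continuous f)
    (μ : Measure Sig) (hprob : IsProbabilityMeasure μ) (herg : Ergodic shift μ) :
    ∀ᵐ x ∂μ, Tendsto
      (fun n : ℕ => ((n : ℝ) + 1)⁻¹ *
        ⨅ y : Z, ∑ i ∈ Finset.range (n + 1), f (shift^[i] x, shift^[i] (y : Sig)))
      atTop
      (nhds (sInf {r : ℝ | ∃ m : Measure (Sig × Sig),
        IsProbabilityMeasure m ∧ m.map (Prod.map shift shift) = m ∧
        m.map Prod.fst = μ ∧ (m.map Prod.snd) Z = 1 ∧ r = ∫ p, f p ∂m})) := by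
  obtain ⟨C, hC⟩ := exists_bound_of_continuous hf
  have : Nonempty Z := hZne.to_subtype
  have hmaps : ∀ y : Z, shift (y : Sig) ∈ Z := fun y => shift_iter_mem hZinv y.2 1
  have hsum : ∀ (n : ℕ) (x y : Sig),
      |∑ i ∈ Finset.range (n + 1), f (shift^[i] x, shift^[i] y)| ≤ C * ((n:ℝ)+1) := by
    intro n x y
    have := sum_abs_le (T := shift2) hC n (x, y)
    simpa only [shift2_iter] using this
  have hsh : ∀ (n : ℕ) (x y : Sig),
      |∑ i ∈ Finset.range (n + 1), f (shift^[i] (shift x), shift^[i] (shift y)) -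
        ∑ i ∈ Finset.range (n + 1), f (shift^[i] x, shift^[i] y)| ≤ C + C := by
    intro n x y
    have := sum_shift shift2 f (n + 1) (x, y)
    simp only [shift2_iter, Prod.map_apply] at this
    rw [this, add_sub_cancel_left]
    exact (abs_sub _ _).trans (add_le_add (hC _) (hC _))
  have hbd := fun n x => infSum_bddBelow (Z := Z) hC n x
  set a : ℕ → Sig → ℝ := fun n x =>
    ⨅ y : Z, ∑ i ∈ Finset.range (n + 1), f (shift^[i] x, shift^[i] (y : Sig)) with ha
  have hale : ∀ n x (y : Z), a n x ≤
      ∑ i ∈ Finset.range (n + 1), f (shift^[i] x, shift^[i] (y : Sig)) :=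
    fun n x y => ciInf_le (hbd n x) y
  have hameas : ∀ n, Measurable (a n) := by
    intro n
    refine UpperSemicontinuous.measurable (upperSemicontinuous_ciInf (hbd n) fun y => ?_)
    refine Continuous.upperSemicontinuous ?_
    exact continuous_finsetSum _ fun i _ =>
      hf.comp ((continuous_shift.iterate i).prodMk continuous_const)
  have habs : ∀ n x, |a n x| ≤ C * ((n:ℝ)+1) := by
    intro n x
    rw [abs_le]
    constructor
    · exact le_ciInf fun y => (abs_le.1 (hsum n x y)).1
    · obtain ⟨y⟩ := this
      exact (hale n x y).trans (abs_le.1 (hsum n x y)).2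
  have hadiff : ∀ n x, |a n (shift x) - a n x| ≤ C + C := by
    intro n x
    rw [abs_le]
    constructor
    · have : a n x - (C + C) ≤ a n (shift x) := by
        refine le_ciInf fun y => ?_
        obtain ⟨z, hz, hzy⟩ : (y : Sig) ∈ shift '' Z := by rw [hZinv]; exact y.2
        have h1 := (abs_le.1 (hsh n x z)).1
        have h2 := hale n x ⟨z, hz⟩
        rw [← hzy]
        simp only at h2
        linarith
      linarith
    · have : a n (shift x) - (C + C) ≤ a n x := by
        refine le_ciInf fun y => ?_
        have h1 := (abs_le.1 (hsh n x y)).2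
        have h2 := hale n (shift x) ⟨_, hmaps y⟩
        simp only at h2
        linarith
      linarith
  obtain ⟨c, hc⟩ := limsup_const_of_ergodic herg a hameas C (C + C) habs hadiff
  have hB : ∀ x, ∀ n : ℕ, |((n:ℝ)+1)⁻¹ * a n x| ≤ C := fun x n => avg_bdd (habs n x)
  have hlow : ∀ m : Measure (Sig × Sig), IsProbabilityMeasure m →
      m.map (Prod.map shift shift) = m → m.map Prod.fst = μ → (m.map Prod.snd) Z = 1 →
      c ≤ ∫ p, f p ∂m := by
    intro m hm hinv hfst hsnd
    refine le_integral_of_limsup (T := shift2) ⟨continuous_shift2.measurable, hinv⟩ f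
      hf.measurable C c hC ?_
    have h1 : ∀ᵐ p ∂m, limsup (fun n : ℕ => ((n:ℝ)+1)⁻¹ * a n p.1) atTop = c := by
      rw [← hfst] at hc
      exact ae_of_ae_map measurable_fst.aemeasurable hc
    have h2 : ∀ᵐ p ∂m, p.2 ∈ Z := by
      rw [Measure.map_apply measurable_snd hZcpt.isClosed.measurableSet] at hsnd
      exact (mem_ae_iff_prob_eq_one
        (hZcpt.isClosed.measurableSet.preimage measurable_snd)).2 hsnd
    filter_upwards [h1, h2] with p hp1 hp2 ε hε
    obtain ⟨n, hn⟩ := exists_lt_of_limsup_eq (hB p.1) hp1 ε hε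
    refine ⟨n, hn.trans_le ?_⟩
    have hp : (0:ℝ) < (n:ℝ)+1 := by positivity
    refine mul_le_mul_of_nonneg_left ?_ (inv_pos.2 hp).le
    simp only [shift2_iter]
    exact hale n p.1 ⟨p.2, hp2⟩
  have hgen : ∀ᵐ x ∂μ, ∀ k : ℕ, Tendsto (fun n : ℕ => ((n:ℝ)+1)⁻¹ * ∑ i ∈ Finset.range (n+1),
        TopologicalSpace.denseSeq C(Sig, ℝ) k (shift^[i] x)) atTop
        (nhds (∫ z, TopologicalSpace.denseSeq C(Sig, ℝ) k z ∂μ)) := by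
    refine ae_all_iff.2 fun k => ?_
    obtain ⟨D, hD⟩ := exists_bound_of_continuous
      (TopologicalSpace.denseSeq C(Sig, ℝ) k).continuous
    exact birkhoff_tendsto herg _ (TopologicalSpace.denseSeq C(Sig, ℝ) k).continuous.measurable D hD
  filter_upwards [hc, hgen] with x hxc hxg
  rw [tendsto_iff_ultrafilter]
  intro U hU
  obtain ⟨m, ⟨hm1, hm2, hm3, hm4⟩, hlim⟩ :=
    exists_joining Z hZne hZcpt hZinv f hf μ hprob x hxg U hU
  have hle : ∫ p, f p ∂m ≤ c := by
    refine le_of_forall_pos_le_add fun ε hε => ?_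
    have h1 : ∀ᶠ n : ℕ in atTop, ((n:ℝ)+1)⁻¹ * a n x < c + ε :=
      eventually_lt_of_limsup_lt (by linarith) (bdd_above_of_abs (hB x))
    exact le_of_tendsto hlim ((h1.filter_mono hU).mono fun n hn => le_of_lt hn)
  have hleast : IsLeast {r : ℝ | ∃ m : Measure (Sig × Sig),
        IsProbabilityMeasure m ∧ m.map (Prod.map shift shift) = m ∧
        m.map Prod.fst = μ ∧ (m.map Prod.snd) Z = 1 ∧ r = ∫ p, f p ∂m} (∫ p, f p ∂m) := by
    refine ⟨⟨m, hm1, hm2, hm3, hm4, rfl⟩, ?_⟩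
    rintro r ⟨m', h1, h2, h3, h4, rfl⟩
    exact hle.trans (hlow m' h1 h2 h3 h4)
  rw [hleast.csInf_eq]
  exact hlim
end
end

section
/- (Subordination-principle failure for weighted shifts) There exist a pair (L₀, L₁) of bounded invertible weighted shift operators with positive coefficients on a separable Hilbert space, and two shift-invariant Borel probability measures μ, ν on Σ₂ with the same support, such that μ is a maximising measure for (L₀, L₁) and ν is not. -/
open MeasureTheory Filter

noncomputable section

variable {H : Type*} [NormedAddCommGroup H] [InnerProductSpace ℝ H] [CompleteSpace H]

/-- The set of pairs of bounded invertible weighted shift operators with positive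
coefficients relative to the orthonormal basis `e` (topologized as a subset of `B(H)²`).
Invertibility corresponds to the coefficient sequences being bounded away from zero. -/
def WSet (e : HilbertBasis ℤ ℝ H) : Set ((H →L[ℝ] H) × (H →L[ℝ] H)) :=
  {p | ∃ α β : ℤ → ℝ,
    (∃ c : ℝ, 0 < c ∧ ∀ i : ℤ, c ≤ α i) ∧ (∃ c : ℝ, 0 < c ∧ ∀ i : ℤ, c ≤ β i) ∧
    (∀ i : ℤ, p.1 (e i) = α i • e (i + 1)) ∧ (∀ i : ℤ, p.2 (e i) = β i • e (i + 1))}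

/-- The product `L_{x_{n-1}} ∘ ⋯ ∘ L_{x_0}` of members of the pair `p = (L₀, L₁)` chosen
according to the symbols of `x`. -/
def opProd (p : (H →L[ℝ] H) × (H →L[ℝ] H)) (x : Sig) (n : ℕ) : H →L[ℝ] H :=
  (List.ofFn fun i : Fin n => if x (i : ℤ) then p.2 else p.1).reverse.prod

/-- The top Lyapunov exponent of the pair `p` with respect to the shift-invariant
measure `μ`: `Λ(p,μ) = inf_{n ≥ 1} (1/n) ∫ log ‖L_{x_{n-1}} ⋯ L_{x_0}‖ dμ(x)`. -/
def LamOp (p : (H →L[ℝ] H) × (H →L[ℝ] H)) (μ : Measure Sig) : ℝ :=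
  ⨅ n : ℕ, ((n : ℝ) + 1)⁻¹ * ∫ x, Real.log ‖opProd p x (n + 1)‖ ∂μ

/-- The logarithm of the joint spectral radius of the pair `p`:
`log ϱ(p) = inf_{n ≥ 1} (1/n) sup_x log ‖L_{x_{n-1}} ⋯ L_{x_0}‖`. -/
def logSprOp (p : (H →L[ℝ] H) × (H →L[ℝ] H)) : ℝ :=
  ⨅ n : ℕ, ((n : ℝ) + 1)⁻¹ * ⨆ x : Sig, Real.log ‖opProd p x (n + 1)‖

/-- The (topological) support of a Borel measure on `Σ₂`. -/
def suppM (μ : Measure Sig) : Set Sig :=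
  {x : Sig | ∀ U : Set Sig, IsOpen U → x ∈ U → 0 < μ U}

namespace SubFail

/-- gain on zeros at level j -/
def gg (j : ℕ) : ℝ := (j : ℝ) / ((4 : ℝ) ^ j - j)

lemma sq_le_four (j : ℕ) : ((j : ℝ) + 1) ^ 2 ≤ (4 : ℝ) ^ j := by
  have h : j + 1 ≤ 2 ^ j := Nat.lt_two_pow_self
  have h' : (j : ℝ) + 1 ≤ (2 : ℝ) ^ j := by exact_mod_cast h
  calc ((j : ℝ) + 1) ^ 2 ≤ ((2 : ℝ) ^ j) ^ 2 := by gcongr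
    _ = (4 : ℝ) ^ j := by rw [← pow_mul, mul_comm, pow_mul]; norm_num

lemma den_pos (j : ℕ) : 0 < (4 : ℝ) ^ j - j := by
  nlinarith [sq_le_four j, (Nat.cast_nonneg j : (0 : ℝ) ≤ j)]

lemma gg_mul (j : ℕ) : gg j * ((4 : ℝ) ^ j - j) = j := by
  have := den_pos j
  unfold gg; field_simp

lemma gg_nonneg (j : ℕ) : 0 ≤ gg j :=
  div_nonneg (Nat.cast_nonneg j) (den_pos j).le

lemma gg_le (j : ℕ) : gg j ≤ 1 / ((j : ℝ) + 1) := by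
  unfold gg
  have hj : (0 : ℝ) ≤ j := Nat.cast_nonneg j
  rw [div_le_div_iff₀ (den_pos j) (by positivity)]
  rcases Nat.eq_zero_or_pos j with h | h
  · subst h; norm_num
  · have h1 : (1 : ℝ) ≤ j := by exact_mod_cast h
    nlinarith [sq_le_four j]

lemma gg_le_half (j : ℕ) : gg j ≤ 1 / 2 := by
  rcases Nat.eq_zero_or_pos j with h | h
  · subst h; norm_num [gg]
  · have h1 : (1 : ℝ) ≤ j := by exact_mod_cast h
    refine (gg_le j).trans ?_
    apply one_div_le_one_div_of_le <;> linarith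

/-- the periodic weight at level j -/
def pj (j : ℕ) (i : ℤ) : ℝ := if i % (4 ^ j : ℤ) < j then -1 else gg j

/-- primitive -/
def hh (j : ℕ) (i : ℤ) : ℝ :=
  if i % (4 ^ j : ℤ) ≤ j then -((i % (4 ^ j : ℤ) : ℤ) : ℝ)
  else -(j : ℝ) + (((i % (4 ^ j : ℤ) : ℤ) : ℝ) - j) * gg j

lemma hh_nonpos (j : ℕ) (i : ℤ) : hh j i ≤ 0 := by
  have hP : (0 : ℤ) < 4 ^ j := by positivity
  have h0 := Int.emod_nonneg i hP.ne'
  have h1 := Int.emod_lt_of_pos i hP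
  have h1' : ((i % (4 ^ j : ℤ) : ℤ) : ℝ) < (4 : ℝ) ^ j := by exact_mod_cast h1
  have h0' : (0 : ℝ) ≤ ((i % (4 ^ j : ℤ) : ℤ) : ℝ) := by exact_mod_cast h0
  unfold hh
  split_ifs with h
  · linarith
  · nlinarith [gg_mul j, gg_nonneg j]

lemma hh_ge (j : ℕ) (i : ℤ) : -(j : ℝ) ≤ hh j i := by
  unfold hh
  split_ifs with h
  · have : ((i % (4 ^ j : ℤ) : ℤ) : ℝ) ≤ (j : ℝ) := by exact_mod_cast h
    linarith
  · push Not at h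
    have : (j : ℝ) < ((i % (4 ^ j : ℤ) : ℤ) : ℝ) := by exact_mod_cast h
    nlinarith [gg_nonneg j]

lemma hh_zero (j : ℕ) (i : ℤ) (h : (4 ^ j : ℤ) ∣ i) : hh j i = 0 := by
  unfold hh
  rw [Int.emod_eq_zero_of_dvd h]
  simp

lemma jlt (j : ℕ) : (j : ℤ) < 4 ^ j := by
  exact_mod_cast (Nat.lt_pow_self (by norm_num : 1 < 4))

lemma pj_eq (j : ℕ) (i : ℤ) : pj j i = hh j (i + 1) - hh j i := by
  have hP : (0 : ℤ) < 4 ^ j := by positivity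
  have h0 := Int.emod_nonneg i hP.ne'
  have h1 := Int.emod_lt_of_pos i hP
  have hj := jlt j
  have key : (i + 1) % (4 ^ j : ℤ) = (i % (4 ^ j : ℤ) + 1) % (4 ^ j : ℤ) := by
    rw [Int.emod_add_emod]
  generalize hr : i % (4 ^ j : ℤ) = r at *
  rcases eq_or_lt_of_le (Int.add_one_le_of_lt h1) with h2 | h2
  · have hz : hh j (i + 1) = 0 := by
      apply hh_zero
      rw [Int.dvd_iff_emod_eq_zero, key, h2, Int.emod_self]
    rw [hz]
    unfold pj hh
    rw [hr]
    have h2' : (r : ℝ) + 1 = (4 : ℝ) ^ j := by exact_mod_cast h2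
    have hg := gg_mul j
    have hrj : (j : ℤ) ≤ r := by omega
    rw [if_neg (by omega)]
    split_ifs with h
    · have : r = j := by omega
      subst this
      push_cast at h2' ⊢
      rw [← h2'] at hg
      linarith
    · rw [← h2'] at hg
      linarith
  · rw [Int.emod_eq_of_lt (by omega) h2] at key
    unfold pj hh
    rw [hr, key]
    rcases lt_trichotomy r j with h | h | h
    · rw [if_pos h, if_pos (by omega), if_pos (by omega)]; push_cast; ring
    · subst h
      rw [if_neg (by omega), if_neg (by omega), if_pos (by omega)]; push_cast; ring
    · rw [if_neg (by omega), if_neg (by omega), if_neg (by omega)]; push_cast; ring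

lemma pj_ge (j : ℕ) (i : ℤ) : -1 ≤ pj j i := by
  unfold pj; split_ifs
  · rfl
  · linarith [gg_nonneg j]

lemma pj_le (j : ℕ) (i : ℤ) : pj j i ≤ gg j := by
  unfold pj; split_ifs
  · linarith [gg_nonneg j]
  · rfl

lemma pj_congr (j : ℕ) (i i' : ℤ) (h : i % (4 ^ j : ℤ) = i' % (4 ^ j : ℤ)) : pj j i = pj j i' := by
  unfold pj; rw [h]

/-- sum over one period vanishes -/
lemma pj_sum (j : ℕ) (a : ℤ) : ∑ t ∈ Finset.range (4 ^ j), pj j (t + a) = 0 := by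
  have h : ∀ n : ℕ, ∑ t ∈ Finset.range n, pj j (t + a) = hh j (n + a) - hh j a := by
    intro n
    induction n with
    | zero => simp
    | succ n ih =>
      rw [Finset.sum_range_succ, ih, pj_eq]
      push_cast
      rw [show (n : ℤ) + 1 + a = n + a + 1 by ring]; ring
  rw [h]
  have : hh j (((4 ^ j : ℕ) : ℤ) + a) = hh j a := by
    unfold hh; push_cast; rw [Int.add_emod_left]
  rw [this, sub_self]

/-- the level in force at position i -/
def jj (i : ℤ) : ℕ := (Nat.unpair (Nat.log 4 i.toNat)).1

/-- log of the weight of L₀ -/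
def psi (i : ℤ) : ℝ := pj (jj i) i

lemma psi_ge (i : ℤ) : -1 ≤ psi i := pj_ge _ _
lemma psi_le (i : ℤ) : psi i ≤ 1 / 2 := (pj_le _ _).trans (gg_le_half _)

lemma psi_step (i : ℤ) : jj (i + 1) = jj i ∨
    ((4 ^ jj (i + 1) : ℤ) ∣ i + 1 ∧ (4 ^ jj i : ℤ) ∣ i + 1) := by
  rcases le_or_gt i 0 with h | h
  · left
    have h1 : i.toNat = 0 := by omega
    have h2 : (i + 1).toNat = 0 ∨ (i + 1).toNat = 1 := by omega
    unfold jj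
    rcases h2 with h2 | h2 <;> simp [h1, h2]
  · obtain ⟨n, rfl⟩ : ∃ n : ℕ, i = n := ⟨i.toNat, by omega⟩
    have hn : n ≠ 0 := by omega
    have e1 : ((n : ℤ) + 1).toNat = n + 1 := by omega
    unfold jj
    rw [e1, Int.toNat_natCast]
    by_cases hl : Nat.log 4 (n + 1) = Nat.log 4 n
    · left; rw [hl]
    · right
      have hle : Nat.log 4 n ≤ Nat.log 4 (n + 1) := Nat.log_mono_right (Nat.le_succ n)
      have hlt : Nat.log 4 n < Nat.log 4 (n + 1) := lt_of_le_of_ne hle (Ne.symm hl)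
      have a1 : 4 ^ (Nat.log 4 (n + 1)) ≤ n + 1 := Nat.pow_log_le_self 4 (by omega)
      have a2 : n < 4 ^ (Nat.log 4 (n + 1)) := Nat.lt_pow_of_log_lt (by norm_num) hlt
      have a3 : n + 1 = 4 ^ (Nat.log 4 (n + 1)) := by omega
      have a4 : (n : ℤ) + 1 = 4 ^ (Nat.log 4 (n + 1)) := by exact_mod_cast a3
      constructor
      · conv_rhs => rw [a4]
        exact pow_dvd_pow _ (Nat.unpair_left_le _)
      · conv_rhs => rw [a4]
        exact pow_dvd_pow _ ((Nat.unpair_left_le _).trans hle)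

/-- bounded corrector -/
def hJ (J : ℕ) (i : ℤ) : ℝ := if jj i < J then hh (jj i) i else 0

lemma hJ_nonpos (J : ℕ) (i : ℤ) : hJ J i ≤ 0 := by
  unfold hJ; split_ifs
  · exact hh_nonpos _ _
  · rfl

lemma hJ_ge (J : ℕ) (i : ℤ) : -(J : ℝ) ≤ hJ J i := by
  unfold hJ; split_ifs with h
  · have : (jj i : ℝ) < J := by exact_mod_cast h
    linarith [hh_ge (jj i) i]
  · simp

lemma psi_le_cob (J : ℕ) (i : ℤ) : psi i ≤ 1 / ((J : ℝ) + 1) + (hJ J (i + 1) - hJ J i) := by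
  have hp : (0 : ℝ) ≤ 1 / ((J : ℝ) + 1) := by positivity
  by_cases hlt : jj i < J
  · have : hJ J (i + 1) = hh (jj i) (i + 1) := by
      rcases psi_step i with h | ⟨h1, h2⟩
      · unfold hJ; rw [h, if_pos hlt]
      · rw [hh_zero _ _ h2]
        unfold hJ
        rw [hh_zero _ _ h1]; simp
    rw [this]
    unfold hJ psi
    rw [if_pos hlt, pj_eq]; linarith
  · have h1 : psi i ≤ 1 / ((J : ℝ) + 1) := by
      refine (pj_le _ _).trans ((gg_le _).trans ?_)
      push Not at hlt
      have : (J : ℝ) ≤ jj i := by exact_mod_cast hlt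
      apply one_div_le_one_div_of_le <;> [positivity; linarith]
    have h0 : hJ J i = 0 := by unfold hJ; rw [if_neg hlt]
    have h2 : 0 ≤ hJ J (i + 1) := by
      rcases psi_step i with h | ⟨h1, h2⟩
      · unfold hJ; rw [h, if_neg hlt]
      · unfold hJ; rw [hh_zero _ _ h1]; simp
    linarith

lemma psi_window (J : ℕ) (k : ℤ) (n : ℕ) :
    ∑ i ∈ Finset.range n, psi (k + i) ≤ n * (1 / ((J : ℝ) + 1)) + J := by
  have h : ∑ i ∈ Finset.range n, psi (k + i) ≤
      n * (1 / ((J : ℝ) + 1)) + (hJ J (k + n) - hJ J k) := by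
    induction n with
    | zero => simp
    | succ n ih =>
      rw [Finset.sum_range_succ]
      have := psi_le_cob J (k + n)
      push_cast
      rw [show k + ((n : ℤ) + 1) = k + n + 1 by ring]
      linarith
  linarith [hJ_nonpos J (k + n), hJ_ge J k]

lemma psi_copy (j t n : ℕ) : ∃ k : ℤ, ∀ i : ℕ, i < n → psi (k + i) = pj j (t + i) := by
  set m := Nat.pair j (t + n) with hm
  have hjm : j ≤ m := Nat.left_le_pair _ _
  have htm : t + n ≤ m := Nat.right_le_pair _ _
  have hm4 : m < 4 ^ m := Nat.lt_pow_self (by norm_num)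
  refine ⟨((4 ^ m + t : ℕ) : ℤ), fun i hi => ?_⟩
  have hlog : Nat.log 4 (4 ^ m + t + i) = m := by
    apply Nat.log_eq_of_pow_le_of_lt_pow
    · omega
    · rw [pow_succ]; omega
  have hjj : jj (((4 ^ m + t : ℕ) : ℤ) + i) = j := by
    unfold jj
    rw [← Nat.cast_add, Int.toNat_natCast, hlog, hm, Nat.unpair_pair]
  unfold psi
  rw [hjj]
  apply pj_congr
  obtain ⟨q, hq⟩ : (4 ^ j : ℤ) ∣ 4 ^ m := pow_dvd_pow _ hjm
  push_cast
  rw [hq, add_assoc, Int.mul_add_emod_self_left]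

end SubFail

namespace SubFail

lemma inner_shift (e : HilbertBasis ℤ ℝ H) (T : H →L[ℝ] H) (c : ℤ → ℝ) (n : ℤ)
    (hT : ∀ k, T (e k) = c k • e (k + n)) (k : ℤ) (x : H) :
    inner ℝ (e (k + n)) (T x) = c k * inner ℝ (e k) x := by
  have h : (innerSL ℝ (e (k + n))).comp T = (c k) • innerSL ℝ (e k) := by
    refine ContinuousLinearMap.ext_on (s := Set.range e)
      (Submodule.dense_iff_topologicalClosure_eq_top.mpr e.dense_span) ?_
    rintro _ ⟨l, rfl⟩
    have ho := orthonormal_iff_ite.mp e.orthonormal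
    simp only [ContinuousLinearMap.comp_apply, innerSL_apply_apply, hT, inner_smul_right,
      ContinuousLinearMap.smul_apply, ho, smul_eq_mul, add_left_inj]
    split_ifs with hkl
    · rw [hkl]
    · simp
  have := congrArg (fun F : H →L[ℝ] ℝ => F x) h
  simpa using this

lemma norm_le_of_shift (e : HilbertBasis ℤ ℝ H) (T : H →L[ℝ] H) (c : ℤ → ℝ) (n : ℤ)
    (hT : ∀ k, T (e k) = c k • e (k + n)) (C : ℝ) (hc0 : ∀ k, 0 ≤ c k) (hc : ∀ k, c k ≤ C) :
    ‖T‖ ≤ C := by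
  have hC : 0 ≤ C := (hc0 0).trans (hc 0)
  refine T.opNorm_le_bound hC fun x => ?_
  have h1 := e.hasSum_inner_mul_inner (T x) (T x)
  have h2 := (e.hasSum_inner_mul_inner x x).mul_left (C ^ 2)
  have h3 := (Equiv.addRight n).hasSum_iff.mpr h1
  have h4 := hasSum_le (fun k => ?_) h3 h2
  · rw [real_inner_self_eq_norm_sq, real_inner_self_eq_norm_sq, ← mul_pow] at h4
    exact (sq_le_sq₀ (norm_nonneg _) (by positivity)).mp h4
  · simp only [Function.comp_apply, Equiv.coe_addRight]
    rw [real_inner_comm (e (k + n)) (T x), real_inner_comm (e k) x, inner_shift e T c n hT]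
    have : c k ^ 2 ≤ C ^ 2 := pow_le_pow_left₀ (hc0 k) (hc k) 2
    nlinarith [sq_nonneg (inner ℝ (e k) x)]

lemma le_norm_of_shift (e : HilbertBasis ℤ ℝ H) (T : H →L[ℝ] H) (c : ℤ → ℝ) (n : ℤ)
    (hT : ∀ k, T (e k) = c k • e (k + n)) (hc0 : ∀ k, 0 ≤ c k) (k : ℤ) :
    c k ≤ ‖T‖ := by
  have h := T.le_opNorm (e k)
  rw [hT, norm_smul, e.orthonormal.1, e.orthonormal.1, Real.norm_of_nonneg (hc0 k)] at h
  simpa using h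

lemma exists_shift (e : HilbertBasis ℤ ℝ H) (c : ℤ → ℝ) (C : ℝ) (hc0 : ∀ k, 0 ≤ c k)
    (hc : ∀ k, c k ≤ C) : ∃ T : H →L[ℝ] H, ∀ k, T (e k) = c k • e (k + 1) := by
  have hC : 0 ≤ C := (hc0 0).trans (hc 0)
  have hsum : ∀ f : lp (fun _ : ℤ => ℝ) 2, Summable fun i : ℤ => ‖c (i - 1) * f (i - 1)‖ ^ 2 := by
    intro f
    have h1 : Summable fun i : ℤ => ‖f i‖ ^ 2 := by
      have := (lp.memℓp f).summable (by norm_num)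
      simpa using this
    have h2 : Summable fun i : ℤ => C ^ 2 * ‖f (i - 1)‖ ^ 2 :=
      ((Equiv.subRight (1 : ℤ)).summable_iff.mpr h1).mul_left _
    refine Summable.of_nonneg_of_le (fun i => by positivity) (fun i => ?_) h2
    rw [norm_mul, mul_pow, Real.norm_of_nonneg (hc0 _)]
    have : c (i - 1) ^ 2 ≤ C ^ 2 := pow_le_pow_left₀ (hc0 _) (hc _) 2
    gcongr
  have hmem : ∀ f : lp (fun _ : ℤ => ℝ) 2,
      Memℓp (fun i : ℤ => c (i - 1) * f (i - 1)) 2 := by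
    intro f
    apply memℓp_gen
    simpa using hsum f
  let S : lp (fun _ : ℤ => ℝ) 2 →ₗ[ℝ] lp (fun _ : ℤ => ℝ) 2 :=
    { toFun := fun f => ⟨fun i => c (i - 1) * f (i - 1), hmem f⟩
      map_add' := by
        intro f g; ext i
        exact mul_add _ _ _
      map_smul' := by
        intro r f; ext i
        simp [mul_left_comm] }
  have hS : ∀ f i, (S f : ℤ → ℝ) i = c (i - 1) * f (i - 1) := fun f i => rfl
  have hnorm : ∀ f : lp (fun _ : ℤ => ℝ) 2, HasSum (fun i => ‖f i‖ ^ 2) (‖f‖ ^ 2) := by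
    intro f
    have := lp.hasSum_norm (p := 2) (by norm_num) f
    simpa using this
  have hb : ∀ f, ‖S f‖ ≤ C * ‖f‖ := by
    intro f
    have h1 := hnorm (S f)
    have h2 := ((Equiv.subRight (1 : ℤ)).hasSum_iff.mpr (hnorm f)).mul_left (C ^ 2)
    have h3 := hasSum_le (fun i => ?_) h1 h2
    · rw [← mul_pow] at h3
      exact (sq_le_sq₀ (norm_nonneg _) (by positivity)).mp h3
    · rw [hS, norm_mul, mul_pow, Real.norm_of_nonneg (hc0 _)]
      have : c (i - 1) ^ 2 ≤ C ^ 2 := pow_le_pow_left₀ (hc0 _) (hc _) 2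
      simp only [Function.comp_apply, Equiv.subRight_apply]
      gcongr
  let T' := S.mkContinuous C hb
  refine ⟨(e.repr.symm.toContinuousLinearEquiv : _ →L[ℝ] H).comp
    (T'.comp (e.repr.toContinuousLinearEquiv : H →L[ℝ] _)), fun k => ?_⟩
  classical
  apply e.repr.injective
  simp only [ContinuousLinearMap.comp_apply, ContinuousLinearEquiv.coe_coe,
    LinearIsometryEquiv.coe_toContinuousLinearEquiv, LinearIsometryEquiv.apply_symm_apply,
    map_smul, e.repr_self]
  ext i
  change c (i - 1) * (lp.single 2 k (1 : ℝ) : lp (fun _ : ℤ => ℝ) 2) (i - 1) = _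
  simp only [lp.coeFn_smul, Pi.smul_apply, smul_eq_mul, lp.single_apply, Pi.single_apply]
  by_cases h : i = k + 1
  · subst h; simp
  · have : i - 1 ≠ k := by omega
    simp [h, this]

/-- exponent function -/
def phi (b : Bool) (i : ℤ) : ℝ := if b then -1 else psi i

lemma phi_ge (b : Bool) (i : ℤ) : -1 ≤ phi b i := by
  unfold phi; split_ifs
  · rfl
  · exact psi_ge i

lemma phi_le_psi (b : Bool) (i : ℤ) : phi b i ≤ psi i := by
  unfold phi; split_ifs
  · exact psi_ge i
  · rfl

lemma opProd_succ (p : (H →L[ℝ] H) × (H →L[ℝ] H)) (x : Sig) (n : ℕ) :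
    opProd p x (n + 1) = (if x (n : ℤ) then p.2 else p.1) * opProd p x n := by
  unfold opProd
  rw [List.ofFn_succ']
  simp

lemma opProd_apply (e : HilbertBasis ℤ ℝ H) (p : (H →L[ℝ] H) × (H →L[ℝ] H))
    (h1 : ∀ i, p.1 (e i) = Real.exp (psi i) • e (i + 1))
    (h2 : ∀ i, p.2 (e i) = Real.exp (-1) • e (i + 1)) (x : Sig) (n : ℕ) (k : ℤ) :
    opProd p x n (e k) =
      Real.exp (∑ i ∈ Finset.range n, phi (x i) (k + i)) • e (k + n) := by
  induction n with
  | zero => simp [opProd]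
  | succ n ih =>
    rw [opProd_succ, ContinuousLinearMap.mul_apply, ih, map_smul, Finset.sum_range_succ,
      Real.exp_add, mul_smul]
    congr 1
    push_cast
    rw [← add_assoc]
    unfold phi
    split_ifs
    · rw [h2]
    · rw [h1]

lemma continuous_opProd (p : (H →L[ℝ] H) × (H →L[ℝ] H)) (n : ℕ) :
    Continuous fun x : Sig => opProd p x n := by
  induction n with
  | zero => simp only [opProd, List.ofFn_zero, List.reverse_nil, List.prod_nil]; exact continuous_const
  | succ n ih =>
    simp only [opProd_succ]
    refine Continuous.mul ?_ ih
    have : Continuous fun b : Bool => if b then p.2 else p.1 := continuous_of_discreteTopology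
    exact this.comp (continuous_apply (n : ℤ))


lemma log_le (e : HilbertBasis ℤ ℝ H) (p : (H →L[ℝ] H) × (H →L[ℝ] H))
    (h1 : ∀ i, p.1 (e i) = Real.exp (psi i) • e (i + 1))
    (h2 : ∀ i, p.2 (e i) = Real.exp (-1) • e (i + 1))
    (x : Sig) (n : ℕ) (C : ℝ)
    (h : ∀ k : ℤ, ∑ i ∈ Finset.range n, phi (x i) (k + i) ≤ C) :
    Real.log ‖opProd p x n‖ ≤ C := by
  have hs := opProd_apply e p h1 h2 x n
  have hpos : 0 < ‖opProd p x n‖ := (Real.exp_pos _).trans_le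
    (le_norm_of_shift e _ _ n hs (fun k => (Real.exp_pos _).le) 0)
  rw [Real.log_le_iff_le_exp hpos]
  exact norm_le_of_shift e _ _ n hs _ (fun k => (Real.exp_pos _).le)
    (fun k => Real.exp_le_exp.mpr (h k))

lemma le_log (e : HilbertBasis ℤ ℝ H) (p : (H →L[ℝ] H) × (H →L[ℝ] H))
    (h1 : ∀ i, p.1 (e i) = Real.exp (psi i) • e (i + 1))
    (h2 : ∀ i, p.2 (e i) = Real.exp (-1) • e (i + 1))
    (x : Sig) (n : ℕ) (k : ℤ) :
    ∑ i ∈ Finset.range n, phi (x i) (k + i) ≤ Real.log ‖opProd p x n‖ := by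
  have hs := opProd_apply e p h1 h2 x n
  have h := le_norm_of_shift e _ _ n hs (fun k => (Real.exp_pos _).le) k
  rwa [Real.le_log_iff_exp_le ((Real.exp_pos _).trans_le h)]

lemma log_ge (e : HilbertBasis ℤ ℝ H) (p : (H →L[ℝ] H) × (H →L[ℝ] H))
    (h1 : ∀ i, p.1 (e i) = Real.exp (psi i) • e (i + 1))
    (h2 : ∀ i, p.2 (e i) = Real.exp (-1) • e (i + 1))
    (x : Sig) (n : ℕ) : -(n : ℝ) ≤ Real.log ‖opProd p x n‖ := by
  refine le_trans ?_ (le_log e p h1 h2 x n 0)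
  have := Finset.card_nsmul_le_sum (Finset.range n) (fun i : ℕ => phi (x i) (0 + i)) (-1)
    (fun i _ => phi_ge _ _)
  simpa using this

lemma log_le_J (e : HilbertBasis ℤ ℝ H) (p : (H →L[ℝ] H) × (H →L[ℝ] H))
    (h1 : ∀ i, p.1 (e i) = Real.exp (psi i) • e (i + 1))
    (h2 : ∀ i, p.2 (e i) = Real.exp (-1) • e (i + 1))
    (x : Sig) (n J : ℕ) :
    Real.log ‖opProd p x n‖ ≤ n * (1 / ((J : ℝ) + 1)) + J :=
  log_le e p h1 h2 x n _ fun k =>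
    (Finset.sum_le_sum fun (i : ℕ) _ => phi_le_psi (x i) (k + i)).trans (psi_window J k n)

lemma log_one_le (e : HilbertBasis ℤ ℝ H) (p : (H →L[ℝ] H) × (H →L[ℝ] H))
    (h1 : ∀ i, p.1 (e i) = Real.exp (psi i) • e (i + 1))
    (h2 : ∀ i, p.2 (e i) = Real.exp (-1) • e (i + 1))
    (x : Sig) : Real.log ‖opProd p x 1‖ ≤ 1 / 2 :=
  log_le e p h1 h2 x 1 _ fun k => by
    simpa using (phi_le_psi (x 0) k).trans (psi_le k)

lemma log_one_ones (e : HilbertBasis ℤ ℝ H) (p : (H →L[ℝ] H) × (H →L[ℝ] H))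
    (h1 : ∀ i, p.1 (e i) = Real.exp (psi i) • e (i + 1))
    (h2 : ∀ i, p.2 (e i) = Real.exp (-1) • e (i + 1))
    : Real.log ‖opProd p (fun _ => true) 1‖ ≤ -1 :=
  log_le e p h1 h2 _ 1 _ fun k => by simp [phi]

lemma meas_log (e : HilbertBasis ℤ ℝ H) (p : (H →L[ℝ] H) × (H →L[ℝ] H))
    (h1 : ∀ i, p.1 (e i) = Real.exp (psi i) • e (i + 1))
    (h2 : ∀ i, p.2 (e i) = Real.exp (-1) • e (i + 1))
    (n : ℕ) : Measurable fun x : Sig => Real.log ‖opProd p x n‖ :=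
  Real.measurable_log.comp (continuous_opProd p n).norm.measurable

lemma integrable_log (e : HilbertBasis ℤ ℝ H) (p : (H →L[ℝ] H) × (H →L[ℝ] H))
    (h1 : ∀ i, p.1 (e i) = Real.exp (psi i) • e (i + 1))
    (h2 : ∀ i, p.2 (e i) = Real.exp (-1) • e (i + 1))
    (μ : Measure Sig) [IsFiniteMeasure μ] (n : ℕ) :
    Integrable (fun x : Sig => Real.log ‖opProd p x n‖) μ := by
  refine Integrable.of_bound (meas_log e p h1 h2 n).aestronglyMeasurable (n : ℝ)
    (Eventually.of_forall fun x => ?_)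
  rw [Real.norm_eq_abs, abs_le]
  refine ⟨log_ge e p h1 h2 x n, ?_⟩
  simpa using log_le_J e p h1 h2 x n 0


/-- the periodic points -/
def yy (j t : ℕ) : Sig := fun i => decide ((t + i) % (4 ^ j : ℤ) < j)

lemma shift_yy (j t : ℕ) : shift (yy j t) = yy j (t + 1) := by
  funext i
  simp only [shift, yy]
  push_cast
  rw [show (t : ℤ) + 1 + i = t + (i + 1) by ring]

lemma yy_period (j : ℕ) : yy j (4 ^ j) = yy j 0 := by
  funext i
  simp [yy]

lemma measurable_shift : Measurable shift :=
  measurable_pi_lambda _ fun i => measurable_pi_apply (i + 1)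

/-- periodic orbit measure -/
def muj (j : ℕ) : Measure Sig :=
  ((4 : ENNReal) ^ j)⁻¹ • ∑ t ∈ Finset.range (4 ^ j), Measure.dirac (yy j t)

/-- maximising measure -/
def mu : Measure Sig := Measure.sum fun j : ℕ => ((2 : ENNReal)⁻¹ ^ (j + 1)) • muj j

instance muj_prob (j : ℕ) : IsProbabilityMeasure (muj j) := by
  constructor
  simp only [muj, Measure.smul_apply, Measure.finsetSum_apply, measure_univ, smul_eq_mul,
    Finset.sum_const, Finset.card_range, nsmul_eq_mul, mul_one]
  push_cast
  exact ENNReal.inv_mul_cancel (by simp) (by simp)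

lemma muj_shift (j : ℕ) : (muj j).map shift = muj j := by
  unfold muj
  rw [Measure.map_smul, Measure.map_finset_sum measurable_shift.aemeasurable]
  congr 1
  simp only [Measure.map_dirac' measurable_shift, shift_yy]
  have h1 := Finset.sum_range_succ (fun t => Measure.dirac (yy j t)) (4 ^ j)
  have h2 := Finset.sum_range_succ' (fun t => Measure.dirac (yy j t)) (4 ^ j)
  rw [h1, yy_period] at h2
  ext s hs
  have h3 := congrArg (fun m : Measure Sig => m s) h2
  simp only [Measure.add_apply] at h3
  exact ((ENNReal.add_left_inj (measure_ne_top _ _)).mp h3).symm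

instance mu_prob : IsProbabilityMeasure mu := by
  constructor
  simp only [mu, Measure.sum_apply _ MeasurableSet.univ, Measure.smul_apply, measure_univ,
    smul_eq_mul, mul_one]
  rw [ENNReal.tsum_geometric_add_one, ENNReal.one_sub_inv_two, inv_inv]
  exact ENNReal.inv_mul_cancel (by simp) (by simp)

lemma mu_shift : mu.map shift = mu := by
  unfold mu
  rw [Measure.map_sum measurable_shift.aemeasurable]
  simp only [Measure.map_smul, muj_shift]

lemma mu_pos (j t : ℕ) (ht : t < 4 ^ j) (U : Set Sig) (hU : IsOpen U) (h : yy j t ∈ U) :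
    0 < mu U := by
  have h1 : 0 < muj j U := by
    simp only [muj, Measure.smul_apply, Measure.finsetSum_apply, smul_eq_mul]
    apply ENNReal.mul_pos
    · simp
    · refine (lt_of_lt_of_le zero_lt_one ?_).ne'
      calc (1 : ENNReal) = Measure.dirac (yy j t) U := by
            rw [Measure.dirac_apply' _ hU.measurableSet]; simp [h]
        _ ≤ _ := Finset.single_le_sum (f := fun t => Measure.dirac (yy j t) U)
            (fun _ _ => zero_le) (Finset.mem_range.mpr ht)
  have h2 : ((2 : ENNReal)⁻¹ ^ (j + 1)) * muj j U ≤ mu U := by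
    have := Measure.le_sum (fun j : ℕ => ((2 : ENNReal)⁻¹ ^ (j + 1)) • muj j) j
    simpa [mu] using this U
  refine lt_of_lt_of_le (ENNReal.mul_pos ?_ h1.ne') h2
  simp

lemma yy_tendsto : Tendsto (fun j : ℕ => yy j (j / 2)) atTop (nhds fun _ => true) := by
  rw [tendsto_pi_nhds]
  intro i
  apply tendsto_nhds_of_eventually_eq
  filter_upwards [eventually_ge_atTop (2 * i.natAbs + 2)] with j hj
  have := jlt j
  simp only [yy, decide_eq_true_eq]
  rw [Int.emod_eq_of_lt] <;> push_cast <;> omega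

lemma mu_pos_ones (U : Set Sig) (hU : IsOpen U) (h : (fun _ => true) ∈ U) : 0 < mu U := by
  obtain ⟨j, hj⟩ := (yy_tendsto.eventually (hU.mem_nhds h)).exists
  refine mu_pos j (j / 2) ?_ U hU hj
  have : j < 4 ^ j := Nat.lt_pow_self (by norm_num)
  omega

/-- non-maximising measure -/
def nu : Measure Sig := (2 : ENNReal)⁻¹ • (mu + Measure.dirac fun _ => true)

instance nu_prob : IsProbabilityMeasure nu := by
  constructor
  simp only [nu, Measure.smul_apply, Measure.add_apply, measure_univ, smul_eq_mul, one_add_one_eq_two]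
  exact ENNReal.inv_mul_cancel (by simp) (by simp)

lemma nu_shift : nu.map shift = nu := by
  unfold nu
  rw [Measure.map_smul, Measure.map_add _ _ measurable_shift, mu_shift,
    Measure.map_dirac' measurable_shift]
  rfl

lemma supp_eq : suppM mu = suppM nu := by
  ext x
  simp only [suppM, Set.mem_setOf_eq]
  refine forall_congr' fun U => forall_congr' fun hU => forall_congr' fun _ => ?_
  have hnu : nu U = 2⁻¹ * (mu U + Measure.dirac (fun _ => true) U) := by
    rw [nu, Measure.smul_apply, Measure.add_apply, smul_eq_mul]
  rw [hnu]
  constructor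
  · intro h
    exact ENNReal.mul_pos (by simp) (by simp [h.ne'])
  · intro h
    by_contra h0
    have h0' : mu U = 0 := by simpa using h0
    have hn : (fun _ => true) ∉ U := fun hm => h0 (mu_pos_ones U hU hm)
    rw [h0', Measure.dirac_apply' _ hU.measurableSet] at h
    simp [hn] at h


lemma log_yy (e : HilbertBasis ℤ ℝ H) (p : (H →L[ℝ] H) × (H →L[ℝ] H))
    (h1 : ∀ i, p.1 (e i) = Real.exp (psi i) • e (i + 1))
    (h2 : ∀ i, p.2 (e i) = Real.exp (-1) • e (i + 1))
    (j t n : ℕ) :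
    ∑ i ∈ Finset.range n, pj j (t + i) ≤ Real.log ‖opProd p (yy j t) n‖ := by
  obtain ⟨k, hk⟩ := psi_copy j t n
  refine le_trans (le_of_eq ?_) (le_log e p h1 h2 (yy j t) n k)
  refine Finset.sum_congr rfl fun i hi => ?_
  rw [phi, hk i (Finset.mem_range.mp hi)]
  by_cases h : ((t : ℤ) + i) % (4 ^ j : ℤ) < j
  · simp [yy, pj, h]
  · simp [yy, h]

lemma int_muj_nonneg (e : HilbertBasis ℤ ℝ H) (p : (H →L[ℝ] H) × (H →L[ℝ] H))
    (h1 : ∀ i, p.1 (e i) = Real.exp (psi i) • e (i + 1))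
    (h2 : ∀ i, p.2 (e i) = Real.exp (-1) • e (i + 1))
    (j n : ℕ) : 0 ≤ ∫ x, Real.log ‖opProd p x n‖ ∂(muj j) := by
  unfold muj
  rw [integral_smul_measure, integral_finset_sum_measure
    (fun t _ => integrable_log e p h1 h2 _ n)]
  refine smul_nonneg ENNReal.toReal_nonneg ?_
  simp only [integral_dirac]
  refine le_trans ?_ (Finset.sum_le_sum fun t _ => log_yy e p h1 h2 j t n)
  rw [Finset.sum_comm]
  simp only [pj_sum, Finset.sum_const_zero, le_refl]

lemma int_mu_nonneg (e : HilbertBasis ℤ ℝ H) (p : (H →L[ℝ] H) × (H →L[ℝ] H))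
    (h1 : ∀ i, p.1 (e i) = Real.exp (psi i) • e (i + 1))
    (h2 : ∀ i, p.2 (e i) = Real.exp (-1) • e (i + 1))
    (n : ℕ) : 0 ≤ ∫ x, Real.log ‖opProd p x n‖ ∂mu := by
  have hi : Integrable (fun x : Sig => Real.log ‖opProd p x n‖) mu := integrable_log e p h1 h2 mu n
  unfold mu at hi ⊢
  rw [integral_sum_measure hi]
  refine tsum_nonneg fun j => ?_
  rw [integral_smul_measure]
  exact smul_nonneg ENNReal.toReal_nonneg (int_muj_nonneg e p h1 h2 j n)

lemma bdd_sup (e : HilbertBasis ℤ ℝ H) (p : (H →L[ℝ] H) × (H →L[ℝ] H))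
    (h1 : ∀ i, p.1 (e i) = Real.exp (psi i) • e (i + 1))
    (h2 : ∀ i, p.2 (e i) = Real.exp (-1) • e (i + 1))
    (n : ℕ) : BddAbove (Set.range fun x : Sig => Real.log ‖opProd p x n‖) :=
  ⟨_, by rintro _ ⟨x, rfl⟩; exact log_le_J e p h1 h2 x n 0⟩

lemma int_ge (e : HilbertBasis ℤ ℝ H) (p : (H →L[ℝ] H) × (H →L[ℝ] H))
    (h1 : ∀ i, p.1 (e i) = Real.exp (psi i) • e (i + 1))
    (h2 : ∀ i, p.2 (e i) = Real.exp (-1) • e (i + 1))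
    (m : Measure Sig) [IsProbabilityMeasure m] (n : ℕ) :
    -1 ≤ ((n : ℝ) + 1)⁻¹ * ∫ x, Real.log ‖opProd p x (n + 1)‖ ∂m := by
  have h := integral_mono (μ := m) (integrable_const (-((n + 1 : ℕ) : ℝ)))
    (integrable_log e p h1 h2 m (n + 1)) (fun x => log_ge e p h1 h2 x (n + 1))
  simp only [integral_const, probReal_univ, one_smul] at h
  push_cast at h
  rw [← div_eq_inv_mul, le_div_iff₀ (by positivity)]
  linarith

lemma bdd_int (e : HilbertBasis ℤ ℝ H) (p : (H →L[ℝ] H) × (H →L[ℝ] H))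
    (h1 : ∀ i, p.1 (e i) = Real.exp (psi i) • e (i + 1))
    (h2 : ∀ i, p.2 (e i) = Real.exp (-1) • e (i + 1))
    (m : Measure Sig) [IsProbabilityMeasure m] :
    BddBelow (Set.range fun n : ℕ =>
      ((n : ℝ) + 1)⁻¹ * ∫ x, Real.log ‖opProd p x (n + 1)‖ ∂m) :=
  ⟨-1, by rintro _ ⟨n, rfl⟩; exact int_ge e p h1 h2 m n⟩

lemma int_le_sup (e : HilbertBasis ℤ ℝ H) (p : (H →L[ℝ] H) × (H →L[ℝ] H))
    (h1 : ∀ i, p.1 (e i) = Real.exp (psi i) • e (i + 1))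
    (h2 : ∀ i, p.2 (e i) = Real.exp (-1) • e (i + 1))
    (m : Measure Sig) [IsProbabilityMeasure m] (n : ℕ) :
    ((n : ℝ) + 1)⁻¹ * ∫ x, Real.log ‖opProd p x (n + 1)‖ ∂m ≤
      ((n : ℝ) + 1)⁻¹ * ⨆ x : Sig, Real.log ‖opProd p x (n + 1)‖ := by
  have h := integral_mono (μ := m) (integrable_log e p h1 h2 m (n + 1))
    (integrable_const (⨆ x : Sig, Real.log ‖opProd p x (n + 1)‖))
    (fun x => le_ciSup (bdd_sup e p h1 h2 (n + 1)) x)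
  simp only [integral_const, probReal_univ, one_smul] at h
  gcongr

lemma lam_le_spr (e : HilbertBasis ℤ ℝ H) (p : (H →L[ℝ] H) × (H →L[ℝ] H))
    (h1 : ∀ i, p.1 (e i) = Real.exp (psi i) • e (i + 1))
    (h2 : ∀ i, p.2 (e i) = Real.exp (-1) • e (i + 1))
    (m : Measure Sig) [IsProbabilityMeasure m] : LamOp p m ≤ logSprOp p :=
  ciInf_mono (bdd_int e p h1 h2 m) (int_le_sup e p h1 h2 m)

lemma lam_mu_nonneg (e : HilbertBasis ℤ ℝ H) (p : (H →L[ℝ] H) × (H →L[ℝ] H))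
    (h1 : ∀ i, p.1 (e i) = Real.exp (psi i) • e (i + 1))
    (h2 : ∀ i, p.2 (e i) = Real.exp (-1) • e (i + 1))
    : 0 ≤ LamOp p mu :=
  le_ciInf fun n => mul_nonneg (by positivity) (int_mu_nonneg e p h1 h2 (n + 1))

lemma spr_nonpos (e : HilbertBasis ℤ ℝ H) (p : (H →L[ℝ] H) × (H →L[ℝ] H))
    (h1 : ∀ i, p.1 (e i) = Real.exp (psi i) • e (i + 1))
    (h2 : ∀ i, p.2 (e i) = Real.exp (-1) • e (i + 1))
    : logSprOp p ≤ 0 := by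
  have hb : BddBelow (Set.range fun n : ℕ =>
      ((n : ℝ) + 1)⁻¹ * ⨆ x : Sig, Real.log ‖opProd p x (n + 1)‖) :=
    ⟨-1, by
      rintro _ ⟨n, rfl⟩
      exact (int_ge e p h1 h2 mu n).trans (int_le_sup e p h1 h2 mu n)⟩
  have key : ∀ J n : ℕ, logSprOp p ≤ 1 / ((J : ℝ) + 1) + J * (1 / ((n : ℝ) + 1)) := by
    intro J n
    refine (ciInf_le hb n).trans ?_
    rw [← div_eq_inv_mul, div_le_iff₀ (by positivity)]
    refine (ciSup_le fun x => log_le_J e p h1 h2 x (n + 1) J).trans (le_of_eq ?_)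
    push_cast
    field_simp
  have key2 : ∀ J : ℕ, logSprOp p ≤ 1 / ((J : ℝ) + 1) := by
    intro J
    have ht : Tendsto (fun n : ℕ => 1 / ((J : ℝ) + 1) + J * (1 / ((n : ℝ) + 1))) atTop
        (nhds (1 / ((J : ℝ) + 1) + J * 0)) :=
      tendsto_const_nhds.add (tendsto_one_div_add_atTop_nhds_zero_nat.const_mul _)
    simpa using ge_of_tendsto' ht (key J)
  exact ge_of_tendsto' tendsto_one_div_add_atTop_nhds_zero_nat key2

lemma lam_nu_neg (e : HilbertBasis ℤ ℝ H) (p : (H →L[ℝ] H) × (H →L[ℝ] H))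
    (h1 : ∀ i, p.1 (e i) = Real.exp (psi i) • e (i + 1))
    (h2 : ∀ i, p.2 (e i) = Real.exp (-1) • e (i + 1))
    : LamOp p nu < 0 := by
  have h := ciInf_le (bdd_int e p h1 h2 nu) 0
  refine lt_of_le_of_lt h ?_
  simp only [Nat.cast_zero, zero_add, inv_one, one_mul]
  unfold nu
  rw [integral_smul_measure, integral_add_measure (integrable_log e p h1 h2 _ 1)
    (integrable_log e p h1 h2 _ 1), integral_dirac]
  have hm := integral_mono (μ := mu) (integrable_log e p h1 h2 mu 1)
    (integrable_const (1 / 2 : ℝ)) (fun x => log_one_le e p h1 h2 x)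
  simp only [integral_const, probReal_univ, one_smul] at hm
  have ho := log_one_ones e p h1 h2
  have : (2⁻¹ : ENNReal).toReal = 2⁻¹ := by simp
  rw [this, smul_eq_mul]
  linarith


end SubFail

/-- (Failure of the subordination principle for weighted shifts.)  There exist a pair
`(L₀, L₁)` of bounded invertible weighted shift operators with positive coefficients on a
separable Hilbert space, and two shift-invariant Borel probability measures `μ, ν` on `Σ₂`
with the same support, such that `μ` is a maximising measure for `(L₀, L₁)` and `ν` is not. -/
theorem subordination_failure (e : HilbertBasis ℤ ℝ H) :
    ∃ p ∈ WSet e, ∃ μ ν : Measure Sig,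
      IsProbabilityMeasure μ ∧ μ.map shift = μ ∧
      IsProbabilityMeasure ν ∧ ν.map shift = ν ∧
      suppM μ = suppM ν ∧
      LamOp p μ = logSprOp p ∧ LamOp p ν ≠ logSprOp p := by
  obtain ⟨A, hA⟩ := SubFail.exists_shift e (fun i => Real.exp (SubFail.psi i)) (Real.exp (1 / 2))
    (fun k => (Real.exp_pos _).le) (fun k => Real.exp_le_exp.mpr (SubFail.psi_le k))
  obtain ⟨B, hB⟩ := SubFail.exists_shift e (fun _ => Real.exp (-1)) (Real.exp (-1))
    (fun k => (Real.exp_pos _).le) (fun k => le_rfl)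
  have hspr := SubFail.spr_nonpos e (A, B) hA hB
  have hle := SubFail.lam_le_spr e (A, B) hA hB SubFail.mu
  have hge := SubFail.lam_mu_nonneg e (A, B) hA hB
  have hnu := SubFail.lam_nu_neg e (A, B) hA hB
  refine ⟨(A, B), ⟨_, _, ⟨Real.exp (-1), Real.exp_pos _, fun i => ?_⟩,
    ⟨Real.exp (-1), Real.exp_pos _, fun i => le_rfl⟩, hA, hB⟩, SubFail.mu, SubFail.nu,
    SubFail.mu_prob, SubFail.mu_shift, SubFail.nu_prob, SubFail.nu_shift, SubFail.supp_eq,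
    by linarith, by intro h; linarith⟩
  exact Real.exp_le_exp.mpr (SubFail.psi_ge i)
end
end
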